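/- Let w ∈ B_n. Then w is a separable signed permutation if and only if there exists a sequence 0 = p_0 < p_1 < p_2 < ⋯ < p_k < p_{k+1} = n (with k ≥ 0) such that: (i) w = w_1⋯w_{p_1} ⊕ sts(w_{p_1+1}⋯w_{p_2}) ⊕ ⋯ ⊕ sts(w_{p_k+1}⋯w_n); (ii) w_1⋯w_{p_1} and each sts(w_{p_i+1}⋯w_{p_{i+1}}) for i ∈ [k] are separable signed permutations; (iii) for each j ∈ [k+1], all entries of the block w_{p_{j−1}+1}⋯w_{p_j} have the same sign, and for each i ∈ [k] the entries of the block w_{p_{i−1}+1}⋯w_{p_i} have sign opposite to the entries of the block w_{p_i+1}⋯w_{p_{i+1}}. Moreover, when w is separable such a sequence is unique. -/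

import Mathlib

/-! Block decompositions of separable signed permutations.

The cut points of a block decomposition are forced: constancy of sign inside blocks and alternation
between blocks say that they are exactly the positions `p` where `w_p` and `w_{p+1}` have opposite
signs (`GoodDecomp.mem_iff`), and an increasing list is determined by its members. This gives
uniqueness.

For existence, cut a separable `w` at all its sign changes. Avoiding `(-2)1` and `2(-1)` means that
two entries of opposite signs increase in absolute value. At a sign change, this forces every entry
to the left to lie below every entry to the right in absolute value (`IsSepB.absCut`): two entries
of equal sign are compared through the entry next to the cut which has the other sign. As the
absolute values of `w` are `1, ..., n`, each block is then its standardization shifted by the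
number of entries before it (`map_shift_sts_block`), so `w` is the direct sum of its standardized
blocks. These avoid the six patterns because standardization preserves pattern containment.

Conversely, each of the six patterns is indecomposable for the direct sum, so an occurrence in
`u ⊕ v` lies entirely in `u` or in `v` (`containsB_append`), and a direct sum of separable
permutations avoids them all (`BoundedSep.foldl`). -/

namespace SepPaperFormal

noncomputable section

open Polynomial

def st (a : List ℤ) : List ℤ :=
  a.map (fun x => ((a.filter (fun y => decide (y < x))).length : ℤ) + 1)

def sts (a : List ℤ) : List ℤ :=
  a.map (fun x => x.sign * (((a.filter (fun y => decide (|y| < |x|))).length : ℤ) + 1))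

def IsSignedPerm (w : List ℤ) : Prop :=
  (w.map Int.natAbs).Perm (List.range' 1 w.length)

def ContainsB (w u : List ℤ) : Prop := ∃ s : List ℤ, s.Sublist w ∧ sts s = u

def ContainsA (w u : List ℤ) : Prop := ∃ s : List ℤ, s.Sublist w ∧ st s = u

def IsSepB (w : List ℤ) : Prop :=
  IsSignedPerm w ∧
    ¬ ContainsB w [-2, 1] ∧ ¬ ContainsB w [2, -1] ∧
    ¬ ContainsB w [3, 1, 4, 2] ∧ ¬ ContainsB w [2, 4, 1, 3] ∧
    ¬ ContainsB w [-3, -1, -4, -2] ∧ ¬ ContainsB w [-2, -4, -1, -3]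

def IsSepA (w : List ℤ) : Prop :=
  IsSignedPerm w ∧ (∀ x ∈ w, 0 < x) ∧
    ¬ ContainsA w [3, 1, 4, 2] ∧ ¬ ContainsA w [2, 4, 1, 3]

def oplus (u v : List ℤ) : List ℤ :=
  u ++ v.map (fun x => x + x.sign * (u.length : ℤ))

def ominus (u v : List ℤ) : List ℤ :=
  u.map (fun x => x + x.sign * (v.length : ℤ)) ++ v

def AllSameSign (l : List ℤ) : Prop := (∀ x ∈ l, 0 < x) ∨ (∀ x ∈ l, x < 0)

def OppSign (a b : List ℤ) : Prop := ∀ x ∈ a, ∀ y ∈ b, x * y < 0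

-- blocks for statement 3
def blockOf (w : List ℤ) (q : List ℕ) (i : ℕ) : List ℤ :=
  (w.drop q[i]!).take (q[i+1]! - q[i]!)

def cutSeq (w : List ℤ) (cuts : List ℕ) : List ℕ := 0 :: (cuts ++ [w.length])

def GoodDecomp (w : List ℤ) (cuts : List ℕ) : Prop :=
  List.Chain' (· < ·) (cutSeq w cuts) ∧
  w = List.foldl oplus (blockOf w (cutSeq w cuts) 0)
        ((List.range cuts.length).map (fun i => sts (blockOf w (cutSeq w cuts) (i + 1)))) ∧
  IsSepB (blockOf w (cutSeq w cuts) 0) ∧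
  (∀ i, 1 ≤ i → i ≤ cuts.length → IsSepB (sts (blockOf w (cutSeq w cuts) i))) ∧
  (∀ j, j ≤ cuts.length → AllSameSign (blockOf w (cutSeq w cuts) j)) ∧
  (∀ i, 1 ≤ i → i ≤ cuts.length →
    OppSign (blockOf w (cutSeq w cuts) (i - 1)) (blockOf w (cutSeq w cuts) i))

-- statement 4
inductive InC : List ℤ → Prop
  | one : InC [1]
  | negone : InC [-1]
  | dsum (u v : List ℤ) : InC u → InC v → InC (oplus u v)
  | ssum (u v : List ℤ) : InC u → InC v → AllSameSign (u ++ v) → InC (ominus u v)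

-- the map φₙ as a relation
inductive PhiRel : List ℤ → List ℤ → Prop
  | base : PhiRel [1] []
  | gasc (w u : List ℤ) (p : ℕ) (hp1 : 1 ≤ p) (hp2 : p < w.length)
      (h : ∀ i j, i < p → p ≤ j → j < w.length → w[i]! < w[j]!)
      (ih : PhiRel (w.take p) u) :
      PhiRel w (oplus u (st (w.drop p)))
  | gdes (w u : List ℤ) (p : ℕ) (hp1 : 1 ≤ p) (hp2 : p < w.length)
      (h : ∀ i j, i < p → p ≤ j → j < w.length → w[j]! < w[i]!)
      (ih : PhiRel (st (w.take p)) u) :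
      PhiRel w (oplus u ((w.drop p).map (fun x => x - ((w.length - p : ℕ) : ℤ) - 1)))

-- the map ψₙ as a relation
inductive PsiRel : List ℤ → List ℤ → Prop
  | base : PsiRel [] [1]
  | pos (w u : List ℤ) (p : ℕ) (hp : p < w.length)
      (hdec : w = oplus (w.take p) (sts (w.drop p)))
      (hsign : AllSameSign (w.drop p))
      (hlast : 0 < w[w.length - 1]!)
      (ih : PsiRel (w.take p) u) :
      PsiRel w (oplus u (sts (w.drop p)))
  | neg (w u : List ℤ) (p : ℕ) (hp : p < w.length)
      (hdec : w = oplus (w.take p) (sts (w.drop p)))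
      (hsign : AllSameSign (w.drop p))
      (hlast : w[w.length - 1]! < 0)
      (ih : PsiRel (w.take p) u) :
      PsiRel w (ominus u ((sts (w.drop p)).map (fun x => x + ((w.length - p : ℕ) : ℤ) + 1)))

-- descent statistics
def DesB (w : List ℤ) : Finset ℕ :=
  (Finset.range w.length).filter (fun i => (if i = 0 then (0 : ℤ) else w[i-1]!) > w[i]!)

def DDesB (w : List ℤ) : Finset ℕ :=
  (Finset.range w.length).filter (fun i =>
    (i = 0 ∨ (if i - 1 = 0 then (0 : ℤ) else w[i-2]!) > (if i = 0 then (0 : ℤ) else w[i-1]!)) ∧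
    (if i = 0 then (0 : ℤ) else w[i-1]!) > w[i]!)

def DesA (w : List ℤ) : Finset ℕ :=
  (Finset.range w.length).filter (fun i => 1 ≤ i ∧ w[i-1]! > w[i]!)

def DDesA (w : List ℤ) : Finset ℕ :=
  (Finset.range w.length).filter (fun i => 1 ≤ i ∧
    (i = 1 ∨ w[i-2]! > w[i-1]!) ∧ w[i-1]! > w[i]!)

-- inversions, negatives, negative sum pairs (0-based index sets)
def InvF (w : List ℤ) : Finset (ℕ × ℕ) :=
  (Finset.range w.length ×ˢ Finset.range w.length).filter
    (fun p => p.1 < p.2 ∧ w[p.2]! < w[p.1]!)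

def NegF (w : List ℤ) : Finset ℕ :=
  (Finset.range w.length).filter (fun i => w[i]! < 0)

def NspF (w : List ℤ) : Finset (ℕ × ℕ) :=
  (Finset.range w.length ×ˢ Finset.range w.length).filter
    (fun p => p.1 < p.2 ∧ w[p.1]! + w[p.2]! < 0)

/-- Left weak order on `S_n` (combinatorial characterization). -/
def leS (u v : List ℤ) : Prop := InvF u ⊆ InvF v

/-- Left weak order on `B_n` (combinatorial characterization). -/
def leB (u v : List ℤ) : Prop := InvF u ⊆ InvF v ∧ NegF u ⊆ NegF v ∧ NspF u ⊆ NspF v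

/-- Coxeter length in type `B`. -/
def lenB (w : List ℤ) : ℕ := (NegF w).card + (InvF w).card + (NspF w).card

/-- Coxeter length in type `A`. -/
def lenS (w : List ℤ) : ℕ := (InvF w).card

def IsPermW (w : List ℤ) : Prop := IsSignedPerm w ∧ ∀ x ∈ w, 0 < x

/-- Rank generating function of the principal lower ideal `Λ_w^B`. -/
def FLamB (w : List ℤ) : Polynomial ℚ :=
  ∑ᶠ u ∈ {u : List ℤ | u.length = w.length ∧ IsSignedPerm u ∧ leB u w},
    (X : Polynomial ℚ) ^ lenB u

/-- Rank generating function of the principal upper ideal `V_w^B`. -/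
def FVB (w : List ℤ) : Polynomial ℚ :=
  ∑ᶠ u ∈ {u : List ℤ | u.length = w.length ∧ IsSignedPerm u ∧ leB w u},
    (X : Polynomial ℚ) ^ lenB u

/-- Rank generating function of the principal lower ideal `Λ_w^S`. -/
def FLamS (w : List ℤ) : Polynomial ℚ :=
  ∑ᶠ u ∈ {u : List ℤ | u.length = w.length ∧ IsPermW u ∧ leS u w},
    (X : Polynomial ℚ) ^ lenS u

/-- Rank generating function of the principal upper ideal `V_w^S`. -/
def FVS (w : List ℤ) : Polynomial ℚ :=
  ∑ᶠ u ∈ {u : List ℤ | u.length = w.length ∧ IsPermW u ∧ leS w u},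
    (X : Polynomial ℚ) ^ lenS u

/-- `[i] = 1 + q + ⋯ + q^{i-1}`. -/
def qint (i : ℕ) : Polynomial ℚ := ∑ j ∈ Finset.range i, (X : Polynomial ℚ) ^ j

/-- `[m]! = [1][2]⋯[m]`. -/
def qfact (m : ℕ) : Polynomial ℚ := ∏ i ∈ Finset.range m, qint (i + 1)

-- separating trees
inductive STree where
  | leaf : STree
  | node : Bool → STree → STree → STree

def numLeaves : STree → ℕ
  | .leaf => 1
  | .node _ l r => numLeaves l + numLeaves r

def Decomp (w : List ℤ) (p : ℕ) : Prop :=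
  (w = oplus (w.take p) (sts (w.drop p)) ∧ IsSepB (w.take p) ∧ IsSepB (sts (w.drop p)) ∧
    AllSameSign (w.drop p)) ∨
  (w = ominus (sts (w.take p)) (w.drop p) ∧ IsSepB (sts (w.take p)) ∧ IsSepB (w.drop p) ∧
    AllSameSign (w.drop p))

/-- `IsSepTree w T`: `T` is the (shape of the) separating tree of the separable signed
permutation `w`, where internal nodes labeled `true` are `⊕`-nodes and those labeled
`false` are `⊖`-nodes, and the separating index is chosen largest possible. -/
inductive IsSepTree : List ℤ → STree → Prop
  | leaf (x : ℤ) : IsSepTree [x] .leaf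
  | nodeA (w : List ℤ) (p : ℕ) (l r : STree)
      (hp1 : 1 ≤ p) (hp2 : p < w.length)
      (hmax : ∀ q, p < q → q < w.length → ¬ Decomp w q)
      (hdec : w = oplus (w.take p) (sts (w.drop p)))
      (h1 : IsSepB (w.take p)) (h2 : IsSepB (sts (w.drop p)))
      (hsgn : AllSameSign (w.drop p))
      (hl : IsSepTree (w.take p) l) (hr : IsSepTree (sts (w.drop p)) r) :
      IsSepTree w (.node (decide (w[p-1]! < w[p]!)) l r)
  | nodeB (w : List ℤ) (p : ℕ) (l r : STree)
      (hp1 : 1 ≤ p) (hp2 : p < w.length)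
      (hmax : ∀ q, p < q → q < w.length → ¬ Decomp w q)
      (hdec : w = ominus (sts (w.take p)) (w.drop p))
      (h1 : IsSepB (sts (w.take p))) (h2 : IsSepB (w.drop p))
      (hsgn : AllSameSign (w.drop p))
      (hl : IsSepTree (sts (w.take p)) l) (hr : IsSepTree (w.drop p) r) :
      IsSepTree w (.node (decide (w[p-1]! < w[p]!)) l r)

/-- Multiset of leaf-counts `N(V)` over internal `⊕`-nodes `V` whose parent is a
`⊖`-node (the root, whose parent label is `none`, is excluded): the set `S⁺(w)`. -/
def plusNodes : STree → Option Bool → Multiset ℕ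
  | .leaf, _ => 0
  | .node b l r, parent =>
      (if b = true ∧ parent = some false then ({numLeaves (.node b l r)} : Multiset ℕ) else 0)
        + plusNodes l (some b) + plusNodes r (some b)

/-- Multiset of leaf-counts `N(V)` over internal `⊖`-nodes `V` whose parent is a
`⊕`-node (root excluded): the set `S⁻(w)`. -/
def minusNodes : STree → Option Bool → Multiset ℕ
  | .leaf, _ => 0
  | .node b l r, parent =>
      (if b = false ∧ parent = some true then ({numLeaves (.node b l r)} : Multiset ℕ) else 0)
        + minusNodes l (some b) + minusNodes r (some b)

/-- `∏_{m ∈ s} [m]!`. -/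
def qfactProd (s : Multiset ℕ) : Polynomial ℚ := (s.map qfact).prod


/-! ### Ranks of absolute values -/

/-- The number of entries of `l` of absolute value smaller than `|x|`. -/
def absRank (l : List ℤ) (x : ℤ) : ℤ := ((l.filter (fun y => decide (|y| < |x|))).length : ℤ)

lemma sts_eq_map (l : List ℤ) : sts l = l.map (fun x => x.sign * (absRank l x + 1)) := rfl

lemma absRank_nonneg (l : List ℤ) (x : ℤ) : 0 ≤ absRank l x := Int.natCast_nonneg _

lemma absRank_append (a b : List ℤ) (x : ℤ) :
    absRank (a ++ b) x = absRank a x + absRank b x := by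
  simp [absRank]

lemma absRank_le_length (l : List ℤ) (x : ℤ) : absRank l x ≤ l.length := by
  unfold absRank
  exact_mod_cast List.length_filter_le _ _

lemma absRank_lt_length {l : List ℤ} {x : ℤ} (hx : x ∈ l) : absRank l x < l.length := by
  unfold absRank
  have : (l.filter (fun y => decide (|y| < |x|))).length < l.length :=
    List.length_filter_lt_length_iff_exists.2 ⟨x, hx, by simp⟩
  exact_mod_cast this

lemma absRank_eq_zero {l : List ℤ} {x : ℤ} (h : ∀ y ∈ l, |x| ≤ |y|) : absRank l x = 0 := by
  have : l.filter (fun y => decide (|y| < |x|)) = [] := by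
    rw [List.filter_eq_nil_iff]
    intro y hy
    simpa using h y hy
  simp [absRank, this]

lemma absRank_eq_length {l : List ℤ} {x : ℤ} (h : ∀ y ∈ l, |y| < |x|) :
    absRank l x = l.length := by
  have : l.filter (fun y => decide (|y| < |x|)) = l := by
    rw [List.filter_eq_self]
    intro y hy
    simpa using h y hy
  simp [absRank, this]

lemma absRank_mono (l : List ℤ) {x y : ℤ} (h : |x| ≤ |y|) : absRank l x ≤ absRank l y := by
  unfold absRank
  rw [← List.countP_eq_length_filter, ← List.countP_eq_length_filter]
  have := List.countP_mono_left (l := l) (p := fun z => decide (|z| < |x|))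
    (q := fun z => decide (|z| < |y|)) (by
      intro z _ hz
      simp only [decide_eq_true_eq] at hz ⊢
      omega)
  exact_mod_cast this

lemma absRank_lt_absRank {l : List ℤ} {x y : ℤ} (hx : x ∈ l) (h : |x| < |y|) :
    absRank l x < absRank l y := by
  -- The entries below `|x|` are among those below `|y|`, and `x` itself is a missing one.
  have h1 : l.filter (fun z => decide (|z| < |x|)) =
      (l.filter (fun z => decide (|z| < |y|))).filter (fun z => decide (|z| < |x|)) := by
    rw [List.filter_filter]
    apply List.filter_congr
    intro z _
    rw [Bool.eq_iff_iff]
    simp only [decide_eq_true_eq, Bool.and_eq_true]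
    omega
  have h2 : (l.filter (fun z => decide (|z| < |x|))).length <
      (l.filter (fun z => decide (|z| < |y|))).length := by
    rw [h1]
    exact List.length_filter_lt_length_iff_exists.2 ⟨x, by simp [hx, h], by simp⟩
  unfold absRank
  exact_mod_cast h2

lemma absRank_lt_iff {l : List ℤ} {x y : ℤ} (hx : x ∈ l) :
    absRank l x < absRank l y ↔ |x| < |y| := by
  refine ⟨fun h => ?_, absRank_lt_absRank hx⟩
  by_contra hc
  exact absurd (absRank_mono l (not_lt.1 hc)) (not_le.2 h)

lemma abs_sign_mul {x r : ℤ} (hx : x ≠ 0) (hr : 0 ≤ r) : |x.sign * (r + 1)| = r + 1 := by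
  rw [abs_mul, Int.abs_eq_natAbs x.sign, Int.natAbs_sign_of_ne_zero hx, Nat.cast_one, one_mul,
    abs_of_nonneg (by omega)]

lemma abs_sign_mul_le {x r : ℤ} (hr : 0 ≤ r) : |x.sign * (r + 1)| ≤ r + 1 := by
  by_cases hx : x = 0
  · subst hx
    simpa using by omega
  · exact (abs_sign_mul hx hr).le

lemma sign_sign_mul (x : ℤ) {r : ℤ} (hr : 0 ≤ r) : (x.sign * (r + 1)).sign = x.sign := by
  rw [Int.sign_mul, Int.sign_sign, Int.sign_eq_one_of_pos (a := r + 1) (by omega), mul_one]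

lemma abs_add_sign_mul {x k : ℤ} (hx : x ≠ 0) (hk : 0 ≤ k) : |x + x.sign * k| = |x| + k := by
  rcases lt_or_gt_of_ne hx with h | h
  · rw [Int.sign_eq_neg_one_of_neg h, abs_of_neg h, abs_of_neg (by omega)]; ring
  · rw [Int.sign_eq_one_of_pos h, abs_of_pos h, abs_of_pos (by omega)]; ring

lemma sign_add_sign_mul (x : ℤ) {k : ℤ} (hk : 0 ≤ k) : (x + x.sign * k).sign = x.sign := by
  rcases lt_trichotomy x 0 with h | h | h
  · rw [Int.sign_eq_neg_one_of_neg h, Int.sign_eq_neg_one_of_neg (by omega)]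
  · simp [h]
  · rw [Int.sign_eq_one_of_pos h, Int.sign_eq_one_of_pos (by omega)]

/-! ### Patterns and standardization -/

/-- Standardization only sees signs and the order of absolute values. -/
lemma sts_map {f : ℤ → ℤ} {l : List ℤ} (hs : ∀ x ∈ l, (f x).sign = x.sign)
    (ho : ∀ x ∈ l, ∀ y ∈ l, |f x| < |f y| ↔ |x| < |y|) : sts (l.map f) = sts l := by
  rw [sts_eq_map, sts_eq_map, List.map_map]
  apply List.map_congr_left
  intro x hx
  have : absRank (l.map f) (f x) = absRank l x := by
    unfold absRank
    rw [List.filter_map, List.length_map]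
    congr 2
    apply List.filter_congr
    intro y hy
    simp [ho y hy x hx]
  simp only [Function.comp, this, hs x hx]

lemma ContainsB.mono {l l' u : List ℤ} (h : l.Sublist l') : ContainsB l u → ContainsB l' u :=
  fun ⟨s, hs, hu⟩ => ⟨s, hs.trans h, hu⟩

lemma containsB_map {f : ℤ → ℤ} {l : List ℤ} (hs : ∀ x ∈ l, (f x).sign = x.sign)
    (ho : ∀ x ∈ l, ∀ y ∈ l, |f x| < |f y| ↔ |x| < |y|) (u : List ℤ) :
    ContainsB (l.map f) u ↔ ContainsB l u := by
  have key : ∀ s : List ℤ, s.Sublist l → sts (s.map f) = sts s := fun s hsl =>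
    sts_map (fun x hx => hs x (hsl.subset hx))
      (fun x hx y hy => ho x (hsl.subset hx) y (hsl.subset hy))
  constructor
  · rintro ⟨s, hsl, hu⟩
    obtain ⟨s', hs', rfl⟩ := List.sublist_map_iff.1 hsl
    exact ⟨s', hs', (key s' hs').symm.trans hu⟩
  · rintro ⟨s, hsl, hu⟩
    exact ⟨s.map f, hsl.map f, (key s hsl).trans hu⟩

lemma containsB_sts {l : List ℤ} (h0 : ∀ x ∈ l, x ≠ 0) (u : List ℤ) :
    ContainsB (sts l) u ↔ ContainsB l u := by
  rw [sts_eq_map]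
  apply containsB_map
  · intro x _
    exact sign_sign_mul x (absRank_nonneg l x)
  · intro x hx y hy
    rw [abs_sign_mul (h0 x hx) (absRank_nonneg _ _), abs_sign_mul (h0 y hy) (absRank_nonneg _ _),
      add_lt_add_iff_right, absRank_lt_iff hx]

/-- `u` has no proper prefix of length `p` whose absolute values are at most `p`; for a signed
permutation this says that `u` is not a direct sum of two nonempty ones. -/
def Indecomposable (u : List ℤ) : Prop :=
  ∀ p < u.length, 0 < p → ∃ x ∈ u.take p, (p : ℤ) < |x|

instance (u : List ℤ) : Decidable (Indecomposable u) := by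
  unfold Indecomposable; infer_instance

/-- An indecomposable pattern of `a ++ b`, where all of `a` lies below all of `b` in absolute
value, is a pattern of `a` or of `b`. -/
lemma containsB_append {a b u : List ℤ} (hu : Indecomposable u)
    (hab : ∀ x ∈ a, ∀ y ∈ b, |x| < |y|) (h : ContainsB (a ++ b) u) :
    ContainsB a u ∨ ContainsB b u := by
  obtain ⟨s, hs, rfl⟩ := h
  obtain ⟨s₁, s₂, rfl, h₁, h₂⟩ := List.sublist_append_iff.1 hs
  rcases s₁.length.eq_zero_or_pos with h0 | hpos
  · rw [List.length_eq_zero_iff] at h0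
    subst h0
    exact Or.inr ⟨s₂, h₂, rfl⟩
  rcases s₂.length.eq_zero_or_pos with h0 | hpos'
  · rw [List.length_eq_zero_iff] at h0
    subst h0
    exact Or.inl ⟨s₁, h₁, by simp⟩
  -- Otherwise the entries of the pattern coming from `a` contradict indecomposability.
  exfalso
  obtain ⟨x, hx, hlt⟩ := hu s₁.length (by simp [sts]; omega) hpos
  rw [sts_eq_map, ← List.map_take, List.take_left' rfl, List.mem_map] at hx
  obtain ⟨z, hz, rfl⟩ := hx
  have h3 : absRank (s₁ ++ s₂) z < s₁.length := by
    rw [absRank_append, absRank_eq_zero (l := s₂)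
      (fun y hy => (hab z (h₁.subset hz) y (h₂.subset hy)).le), add_zero]
    exact absRank_lt_length hz
  have := abs_sign_mul_le (x := z) (absRank_nonneg (s₁ ++ s₂) z)
  omega

/-- The six patterns that a separable signed permutation avoids. -/
def sepPatterns : List (List ℤ) :=
  [[-2, 1], [2, -1], [3, 1, 4, 2], [2, 4, 1, 3], [-3, -1, -4, -2], [-2, -4, -1, -3]]

lemma isSepB_iff {w : List ℤ} :
    IsSepB w ↔ IsSignedPerm w ∧ ∀ u ∈ sepPatterns, ¬ ContainsB w u := by
  simp [IsSepB, sepPatterns]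

lemma indecomposable_of_mem_sepPatterns : ∀ u ∈ sepPatterns, Indecomposable u := by
  decide

lemma IsSignedPerm.ne_zero {w : List ℤ} (h : IsSignedPerm w) : ∀ x ∈ w, x ≠ 0 := by
  intro x hx h0
  have := h.subset (List.mem_map_of_mem (f := Int.natAbs) hx)
  rw [List.mem_range'_1] at this
  omega

lemma IsSignedPerm.abs_le {w : List ℤ} (h : IsSignedPerm w) : ∀ x ∈ w, |x| ≤ w.length := by
  intro x hx
  have := h.subset (List.mem_map_of_mem (f := Int.natAbs) hx)
  rw [List.mem_range'_1] at this
  rw [Int.abs_eq_natAbs]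
  omega

lemma IsSignedPerm.nodup {w : List ℤ} (h : IsSignedPerm w) : (w.map Int.natAbs).Nodup :=
  h.nodup_iff.2 List.nodup_range'

/-! ### Direct sums of separable permutations -/

/-- Absolute values are bounded by the length and the six patterns are avoided. Unlike separability
itself, this is preserved by direct sums without any counting argument on the set of values. -/
def BoundedSep (a : List ℤ) : Prop :=
  (∀ x ∈ a, |x| ≤ a.length) ∧ ∀ u ∈ sepPatterns, ¬ ContainsB a u

lemma IsSepB.boundedSep {a : List ℤ} (h : IsSepB a) : BoundedSep a :=
  ⟨(isSepB_iff.1 h).1.abs_le, (isSepB_iff.1 h).2⟩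

lemma BoundedSep.oplus {a b : List ℤ} (ha : BoundedSep a) (hb : IsSepB b) :
    BoundedSep (oplus a b) := by
  obtain ⟨hbp, hbu⟩ := isSepB_iff.1 hb
  have hk : (0 : ℤ) ≤ a.length := Int.natCast_nonneg _
  have habs : ∀ x ∈ b, |x + x.sign * (a.length : ℤ)| = |x| + a.length := fun x hx =>
    abs_add_sign_mul (hbp.ne_zero x hx) hk
  constructor
  · intro x hx
    rw [SepPaperFormal.oplus, List.mem_append, List.mem_map] at hx
    rw [SepPaperFormal.oplus, List.length_append, List.length_map]
    push_cast
    rcases hx with hx | ⟨y, hy, rfl⟩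
    · have := ha.1 x hx
      omega
    · rw [habs y hy]
      have := hbp.abs_le y hy
      omega
  · intro u hu hc
    have hlt : ∀ x ∈ a, ∀ y ∈ b.map (fun x => x + x.sign * (a.length : ℤ)), |x| < |y| := by
      intro x hx y hy
      obtain ⟨z, hz, rfl⟩ := List.mem_map.1 hy
      rw [habs z hz]
      have h1 := ha.1 x hx
      have h2 := abs_pos.2 (hbp.ne_zero z hz)
      omega
    rcases containsB_append (indecomposable_of_mem_sepPatterns u hu) hlt hc with h | h
    · exact ha.2 u hu h
    · refine hbu u hu ((containsB_map ?_ ?_ u).1 h)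
      · intro x _
        exact sign_add_sign_mul x hk
      · intro x hx y hy
        rw [habs x hx, habs y hy, add_lt_add_iff_right]

lemma BoundedSep.foldl {L : List (List ℤ)} : ∀ {a : List ℤ}, BoundedSep a →
    (∀ b ∈ L, IsSepB b) → BoundedSep (List.foldl SepPaperFormal.oplus a L) := by
  induction L with
  | nil => exact fun ha _ => ha
  | cons b L ih =>
    intro a ha hL
    exact ih (ha.oplus (hL b (by simp))) (fun c hc => hL c (by simp [hc]))

lemma GoodDecomp.isSepB {w : List ℤ} {cuts : List ℕ} (hperm : IsSignedPerm w)
    (h : GoodDecomp w cuts) : IsSepB w := by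
  obtain ⟨-, heq, h0, hi, -, -⟩ := h
  refine isSepB_iff.2 ⟨hperm, ?_⟩
  rw [heq]
  refine (h0.boundedSep.foldl ?_).2
  intro b hb
  obtain ⟨i, hik, rfl⟩ := List.mem_map.1 hb
  exact hi (i + 1) (by omega) (by have := List.mem_range.1 hik; omega)

/-! ### Standardizing a block -/

lemma card_filter_lt_range' {n m : ℕ} (h1 : 1 ≤ m) (h2 : m ≤ n) :
    ((List.range' 1 n).filter (fun y => decide (y < m))).length = m - 1 := by
  have : List.range' 1 n = List.range' 1 (m - 1) ++ List.range' m (n - (m - 1)) := by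
    have h := List.range'_append_1 (s := 1) (m := m - 1) (n := n - (m - 1))
    rw [show 1 + (m - 1) = m by omega, show m - 1 + (n - (m - 1)) = n by omega] at h
    exact h.symm
  rw [this, List.filter_append, List.filter_eq_self.2, List.filter_eq_nil_iff.2]
  · simp
  · intro a ha
    rw [List.mem_range'_1] at ha
    simpa using ha.1
  · intro a ha
    rw [List.mem_range'_1] at ha
    simpa using by omega

lemma IsSignedPerm.absRank_eq {w : List ℤ} (h : IsSignedPerm w) {x : ℤ} (hx : x ∈ w) :
    absRank w x = |x| - 1 := by
  have hm := h.subset (List.mem_map_of_mem (f := Int.natAbs) hx)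
  rw [List.mem_range'_1] at hm
  have h1 := (h.filter (fun y => decide (y < x.natAbs))).length_eq
  rw [card_filter_lt_range' hm.1 (by omega), List.filter_map, List.length_map] at h1
  have h2 : w.filter (fun y => decide (|y| < |x|)) =
      w.filter ((fun y => decide (y < x.natAbs)) ∘ Int.natAbs) := by
    apply List.filter_congr
    intro y _
    rw [Bool.eq_iff_iff]
    simp only [decide_eq_true_eq, Function.comp]
    rw [Int.abs_eq_natAbs, Int.abs_eq_natAbs]
    omega
  rw [absRank, h2, h1, Int.abs_eq_natAbs]
  omega

lemma isSignedPerm_sts {l : List ℤ} (h0 : ∀ x ∈ l, x ≠ 0) (hd : (l.map Int.natAbs).Nodup) :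
    IsSignedPerm (sts l) := by
  have hval : ∀ x ∈ l, ((x.sign * (absRank l x + 1)).natAbs : ℤ) = absRank l x + 1 := by
    intro x hx
    rw [← Int.abs_eq_natAbs, abs_sign_mul (h0 x hx) (absRank_nonneg l x)]
  unfold IsSignedPerm
  rw [show (sts l).length = l.length by simp [sts], sts_eq_map, List.map_map]
  refine (List.subperm_of_subset ?_ ?_).perm_of_length_le (by simp)
  · unfold List.Nodup at hd ⊢
    rw [List.pairwise_map] at hd ⊢
    refine hd.imp_of_mem ?_
    intro x y hx hy hne heq
    simp only [Function.comp] at heq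
    have h1 := hval x hx
    have h2 := hval y hy
    rw [heq, h2] at h1
    rcases lt_trichotomy |x| |y| with h | h | h
    · have := absRank_lt_absRank hx h
      omega
    · rw [Int.abs_eq_natAbs, Int.abs_eq_natAbs] at h
      omega
    · have := absRank_lt_absRank hy h
      omega
  · intro m hm
    obtain ⟨x, hx, rfl⟩ := List.mem_map.1 hm
    have h1 := hval x hx
    have h2 := absRank_lt_length hx
    have h3 := absRank_nonneg l x
    simp only [Function.comp, List.mem_range'_1]
    omega

lemma IsSepB.sts_of_sublist {w l : List ℤ} (h : IsSepB w) (hl : l.Sublist w) : IsSepB (sts l) := by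
  obtain ⟨hp, hu⟩ := isSepB_iff.1 h
  have h0 : ∀ x ∈ l, x ≠ 0 := fun x hx => hp.ne_zero x (hl.subset hx)
  refine isSepB_iff.2 ⟨isSignedPerm_sts h0 (hp.nodup.sublist (hl.map _)), fun u hmem hc => ?_⟩
  exact hu u hmem (((containsB_sts h0 u).1 hc).mono hl)

/-- All entries of `w` before position `p` lie below all later ones in absolute value. -/
def AbsCut (w : List ℤ) (p : ℕ) : Prop := ∀ x ∈ w.take p, ∀ y ∈ w.drop p, |x| < |y|

/-- Between two cuts of a signed permutation, the block is recovered from its standardization by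
shifting absolute values by the position of the first cut. -/
lemma map_shift_sts_block {w : List ℤ} (hw : IsSignedPerm w) {a b : ℕ} (hab : a ≤ b)
    (hb : b ≤ w.length) (ha : AbsCut w a) (hb' : AbsCut w b) :
    (sts ((w.drop a).take (b - a))).map (fun x => x + x.sign * (a : ℤ)) =
      (w.drop a).take (b - a) := by
  set B := (w.drop a).take (b - a) with hB
  have htake : w.take b = w.take a ++ B := by
    rw [show b = a + (b - a) by omega, List.take_add, hB]
  have hsplit : w = w.take a ++ (B ++ w.drop b) := by
    rw [← List.append_assoc, ← htake, List.take_append_drop]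
  rw [sts_eq_map, List.map_map]
  conv_rhs => rw [← List.map_id B]
  apply List.map_congr_left
  intro x hx
  have hxd : x ∈ w.drop a := (List.take_sublist _ _).subset hx
  have hr : absRank w x = a + absRank B x := by
    conv_lhs => rw [hsplit]
    rw [absRank_append, absRank_append, absRank_eq_length (fun y hy => ha y hy x hxd),
      absRank_eq_zero (l := w.drop b) (fun y hy => (hb' x (by rw [htake]; simp [hx]) y hy).le),
      List.length_take, min_eq_left (by omega), add_zero]
  rw [hw.absRank_eq ((List.drop_sublist _ _).subset hxd)] at hr
  have hn := absRank_nonneg B x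
  simp only [Function.comp, id, sign_sign_mul x hn]
  rw [← mul_add, show absRank B x + 1 + a = |x| by omega, Int.sign_mul_abs]

/-! ### Cut sequences -/

lemma cutSeq_zero (w : List ℤ) (c : List ℕ) : (cutSeq w c)[0]! = 0 := rfl

lemma cutSeq_last (w : List ℤ) (c : List ℕ) : (cutSeq w c)[c.length + 1]! = w.length := by
  simp [cutSeq]

lemma cutSeq_succ (w : List ℤ) {cuts : List ℕ} {i : ℕ} (hi : i < cuts.length) :
    (cutSeq w cuts)[i + 1]! = cuts[i] := by
  simp [cutSeq, List.getElem?_append, hi]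

lemma cutSeq_strict {w : List ℤ} {c : List ℕ} (h : (cutSeq w c).Pairwise (· < ·)) {i j : ℕ}
    (hij : i < j) (hj : j ≤ c.length + 1) : (cutSeq w c)[i]! < (cutSeq w c)[j]! := by
  have hl : (cutSeq w c).length = c.length + 2 := by simp [cutSeq]
  rw [getElem!_pos _ i (by omega), getElem!_pos _ j (by omega)]
  exact List.pairwise_iff_getElem.1 h i j (by omega) (by omega) hij

lemma mem_iff_cutSeq (w : List ℤ) (c : List ℕ) (p : ℕ) :
    p ∈ c ↔ ∃ i, 1 ≤ i ∧ i ≤ c.length ∧ (cutSeq w c)[i]! = p := by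
  rw [List.mem_iff_getElem]
  constructor
  · rintro ⟨i, hi, rfl⟩
    exact ⟨i + 1, by omega, by omega, cutSeq_succ w hi⟩
  · rintro ⟨i, h1, h2, rfl⟩
    obtain ⟨j, rfl⟩ : ∃ j, i = j + 1 := ⟨i - 1, by omega⟩
    have hj : j < c.length := by omega
    exact ⟨j, hj, (cutSeq_succ w hj).symm⟩

lemma exists_block {w : List ℤ} {c : List ℕ} {p : ℕ} (hp : p < w.length) :
    ∃ i ≤ c.length, (cutSeq w c)[i]! ≤ p ∧ p < (cutSeq w c)[i + 1]! := by
  by_contra! hcon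
  have : ∀ i, i ≤ c.length + 1 → (cutSeq w c)[i]! ≤ p := by
    intro i
    induction i with
    | zero => intro _; rw [cutSeq_zero]; omega
    | succ i ih => intro hi; exact hcon i (by omega) (ih (by omega))
  have := this _ le_rfl
  rw [cutSeq_last] at this
  omega

lemma mem_blockOf {w : List ℤ} {q : List ℕ} {i : ℕ} (hq : q[i + 1]! ≤ w.length) {x : ℤ} :
    x ∈ blockOf w q i ↔ ∃ t, q[i]! ≤ t ∧ t < q[i + 1]! ∧ w[t]! = x := by
  unfold blockOf
  rw [List.mem_iff_getElem]
  constructor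
  · rintro ⟨t, ht, rfl⟩
    rw [List.length_take, List.length_drop] at ht
    refine ⟨q[i]! + t, by omega, by omega, ?_⟩
    rw [getElem!_pos _ _ (by omega), List.getElem_take, List.getElem_drop]
  · rintro ⟨t, h1, h2, rfl⟩
    refine ⟨t - q[i]!, by rw [List.length_take, List.length_drop]; omega, ?_⟩
    rw [getElem!_pos w t (by omega), List.getElem_take, List.getElem_drop]
    congr 1
    omega

lemma cutSeq_le {w : List ℤ} {c : List ℕ} (h : (cutSeq w c).Pairwise (· < ·)) {i : ℕ}
    (hi : i ≤ c.length + 1) : (cutSeq w c)[i]! ≤ w.length := by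
  rcases hi.eq_or_lt with rfl | hlt
  · exact (cutSeq_last w c).le
  · rw [← cutSeq_last w c]
    exact (cutSeq_strict h hlt le_rfl).le

/-- The position `p` is a sign change: the entries just before and just after it have opposite
signs. -/
def SignChange (w : List ℤ) (p : ℕ) : Prop :=
  0 < p ∧ p < w.length ∧ w[p - 1]! * w[p]! < 0

/-- The cut points of a block decomposition are exactly the sign changes. -/
lemma GoodDecomp.mem_iff {w : List ℤ} {c : List ℕ} (h : GoodDecomp w c) (p : ℕ) :
    p ∈ c ↔ SignChange w p := by
  obtain ⟨hch, -, -, -, hsame, hopp⟩ := h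
  have hch' : (cutSeq w c).Pairwise (· < ·) := List.isChain_iff_pairwise.1 hch
  constructor
  · intro hp
    obtain ⟨i, h1, h2, rfl⟩ := (mem_iff_cutSeq w c p).1 hp
    obtain ⟨j, rfl⟩ : ∃ j, i = j + 1 := ⟨i - 1, by omega⟩
    have hlt1 := cutSeq_strict hch' (show j < j + 1 by omega) (by omega)
    have hlt2 := cutSeq_strict hch' (show j + 1 < j + 1 + 1 by omega) (by omega)
    have hle := cutSeq_le hch' (show j + 1 + 1 ≤ c.length + 1 by omega)
    refine ⟨by omega, by omega, hopp (j + 1) h1 h2 _ ?_ _ ?_⟩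
    · exact (mem_blockOf (i := j) (by omega)).2 ⟨_, by omega, by omega, rfl⟩
    · exact (mem_blockOf hle).2 ⟨_, le_rfl, hlt2, rfl⟩
  · rintro ⟨h0, hlt, hneg⟩
    obtain ⟨i, hi, h1, h2⟩ := exists_block (c := c) hlt
    have hle := cutSeq_le hch' (show i + 1 ≤ c.length + 1 by omega)
    rcases h1.eq_or_lt with heq | hlt'
    · refine (mem_iff_cutSeq w c p).2 ⟨i, ?_, hi, heq⟩
      by_contra hi0
      obtain rfl : i = 0 := by omega
      rw [cutSeq_zero] at heq
      omega
    · exfalso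
      -- The interior of a block contains no sign change.
      have m1 := (mem_blockOf (x := w[p - 1]!) hle).2 ⟨p - 1, by omega, by omega, rfl⟩
      have m2 := (mem_blockOf (x := w[p]!) hle).2 ⟨p, by omega, by omega, rfl⟩
      rcases hsame i hi with h | h
      · exact absurd (mul_pos (h _ m1) (h _ m2)) (by omega)
      · exact absurd (mul_pos_of_neg_of_neg (h _ m1) (h _ m2)) (by omega)

lemma GoodDecomp.pairwise {w : List ℤ} {c : List ℕ} (h : GoodDecomp w c) :
    c.Pairwise (· < ·) := by
  have h1 : (cutSeq w c).Pairwise (· < ·) := List.isChain_iff_pairwise.1 h.1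
  exact (List.pairwise_append.1 (List.pairwise_cons.1 h1).2).1

lemma GoodDecomp.unique {w : List ℤ} {c₁ c₂ : List ℕ} (h₁ : GoodDecomp w c₁)
    (h₂ : GoodDecomp w c₂) : c₁ = c₂ := by
  refine List.Perm.eq_of_pairwise (le := (· < ·)) ?_ h₁.pairwise h₂.pairwise ?_
  · intro a b _ _ hab hba
    omega
  · refine (List.perm_ext_iff_of_nodup (h₁.pairwise.imp ne_of_lt) (h₂.pairwise.imp ne_of_lt)).2 ?_
    intro p
    rw [h₁.mem_iff, h₂.mem_iff]

/-! ### The decomposition of a separable permutation -/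

lemma getElem_pair_sublist {w : List ℤ} {s t : ℕ} (hst : s < t) (ht : t < w.length) :
    [w[s]!, w[t]!].Sublist w := by
  rw [getElem!_pos w s (by omega), getElem!_pos w t ht]
  have h1 : [w[s]].Sublist (w.take t) :=
    List.singleton_sublist.2 (List.mem_take_iff_getElem.2 ⟨s, by omega, rfl⟩)
  have h2 : [w[t]].Sublist (w.drop t) :=
    List.singleton_sublist.2 (List.mem_drop_iff_getElem.2 ⟨0, by omega, by simp⟩)
  simpa using h1.append h2

lemma IsSignedPerm.abs_ne {w : List ℤ} (h : IsSignedPerm w) {s t : ℕ} (hst : s < t)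
    (ht : t < w.length) : |w[s]!| ≠ |w[t]!| := by
  have hn := h.nodup.sublist ((getElem_pair_sublist hst ht).map Int.natAbs)
  have hn' : (w[s]!).natAbs ≠ (w[t]!).natAbs := (List.pairwise_pair.1 hn)
  rw [Int.abs_eq_natAbs, Int.abs_eq_natAbs]
  omega

/-- Avoiding `(−2)1` and `2(−1)`: entries of opposite signs increase in absolute value. -/
lemma IsSepB.abs_lt_of_mul_neg {w : List ℤ} (h : IsSepB w) {s t : ℕ} (hst : s < t)
    (ht : t < w.length) (hneg : w[s]! * w[t]! < 0) : |w[s]!| < |w[t]!| := by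
  have hsub := getElem_pair_sublist hst ht
  have hne := h.1.abs_ne hst ht
  obtain ⟨-, hn, hp, -⟩ := h
  by_contra hle
  have hlt : |w[t]!| < |w[s]!| := by omega
  generalize w[s]! = x at *
  generalize w[t]! = y at *
  rcases mul_neg_iff.1 hneg with ⟨h1, h2⟩ | ⟨h1, h2⟩
  · refine hp ⟨_, hsub, ?_⟩
    simp [sts, hlt, hlt.le, Int.sign_eq_one_of_pos h1, Int.sign_eq_neg_one_of_neg h2]
  · refine hn ⟨_, hsub, ?_⟩
    simp [sts, hlt, hlt.le, Int.sign_eq_one_of_pos h2, Int.sign_eq_neg_one_of_neg h1]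

/-- Two entries of equal sign on either side of a sign change are compared through whichever of
the two entries at the sign change has the opposite sign. -/
lemma IsSepB.absCut {w : List ℤ} (h : IsSepB w) {p : ℕ} (hp : SignChange w p) : AbsCut w p := by
  obtain ⟨h0, hlt, hneg⟩ := hp
  intro x hx y hy
  obtain ⟨s, hs, rfl⟩ := List.mem_take_iff_getElem.1 hx
  obtain ⟨t, ht, rfl⟩ := List.mem_drop_iff_getElem.1 hy
  rw [lt_min_iff] at hs
  rw [← getElem!_pos w s hs.2, ← getElem!_pos w (p + t) (by omega)]
  have hne : ∀ r < w.length, w[r]! ≠ 0 := fun r hr =>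
    h.1.ne_zero _ (by rw [getElem!_pos w r hr]; exact List.getElem_mem hr)
  by_cases hst : w[s]! * w[p + t]! < 0
  · exact h.abs_lt_of_mul_neg (by omega) (by omega) hst
  have hpos : 0 < w[s]! * w[p + t]! :=
    lt_of_le_of_ne (not_lt.1 hst) (mul_ne_zero (hne _ hs.2) (hne _ (by omega))).symm
  have key : ∀ r, s ≤ r → r ≤ p + t → w[s]! * w[r]! < 0 → |w[s]!| < |w[p + t]!| := by
    intro r h1 h2 h3
    have hsr : s ≠ r := by
      rintro rfl
      exact absurd h3 (not_lt.2 (mul_self_nonneg _))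
    have hrt : r ≠ p + t := by
      rintro rfl
      omega
    refine (h.abs_lt_of_mul_neg (by omega) (by omega) h3).trans
      (h.abs_lt_of_mul_neg (s := r) (by omega) (by omega) ?_)
    by_contra hc
    rcases mul_pos_iff.1 hpos with ⟨a, b⟩ | ⟨a, b⟩ <;> nlinarith
  by_cases hc : w[s]! * w[p]! < 0
  · exact key p (by omega) (by omega) hc
  · refine key (p - 1) (by omega) (by omega) ?_
    have hc' : 0 < w[s]! * w[p]! :=
      lt_of_le_of_ne (not_lt.1 hc) (mul_ne_zero (hne _ hs.2) (hne _ hlt)).symm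
    rcases mul_pos_iff.1 hc' with ⟨a, b⟩ | ⟨a, b⟩ <;> rcases mul_neg_iff.1 hneg with ⟨d, e⟩ | ⟨d, e⟩
    all_goals first | omega | nlinarith

lemma exists_sorted_signChanges (w : List ℤ) :
    ∃ c : List ℕ, c.Pairwise (· < ·) ∧ ∀ p, p ∈ c ↔ SignChange w p := by
  classical
  refine ⟨(List.range w.length).filter (fun p => decide (SignChange w p)),
    List.pairwise_lt_range.filter _, fun p => ?_⟩
  simp only [List.mem_filter, List.mem_range, decide_eq_true_eq, and_iff_right_iff_imp]
  exact fun h => h.2.1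

lemma IsSepB.exists_goodDecomp {w : List ℤ} (hw : 0 < w.length) (h : IsSepB w) :
    ∃ c, GoodDecomp w c := by
  obtain ⟨c, hc, hmem⟩ := exists_sorted_signChanges w
  have hq : (cutSeq w c).Pairwise (· < ·) := by
    unfold cutSeq
    rw [List.pairwise_cons, List.pairwise_append]
    refine ⟨?_, hc, by simp, ?_⟩
    · intro p hp
      rcases List.mem_append.1 hp with hp | hp
      · exact ((hmem p).1 hp).1
      · rw [List.mem_singleton.1 hp]
        exact hw
    · intro p hp q hq
      rw [List.mem_singleton.1 hq]
      exact ((hmem p).1 hp).2.1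
  have hperm := h.1
  have hne : ∀ r < w.length, w[r]! ≠ 0 := fun r hr =>
    hperm.ne_zero _ (by rw [getElem!_pos w r hr]; exact List.getElem_mem hr)
  have hcut : ∀ i ≤ c.length + 1, AbsCut w (cutSeq w c)[i]! := by
    intro i hi
    rcases i.eq_zero_or_pos with rfl | hpos
    · rw [cutSeq_zero]
      intro x hx
      simp at hx
    rcases hi.eq_or_lt with rfl | hlt
    · rw [cutSeq_last]
      intro x _ y hy
      simp at hy
    · exact h.absCut ((hmem _).1 ((mem_iff_cutSeq w c _).2 ⟨i, hpos, by omega, rfl⟩))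
  have hshift : ∀ i ≤ c.length, (sts (blockOf w (cutSeq w c) i)).map
      (fun x => x + x.sign * ((cutSeq w c)[i]! : ℤ)) = blockOf w (cutSeq w c) i := fun i hi =>
    map_shift_sts_block hperm (cutSeq_strict hq (by omega) (by omega)).le
      (cutSeq_le hq (by omega)) (hcut i (by omega)) (hcut (i + 1) (by omega))
  have hblock0 : sts (blockOf w (cutSeq w c) 0) = blockOf w (cutSeq w c) 0 := by
    have := hshift 0 (by omega)
    rw [cutSeq_zero] at this
    simpa using this
  have hsub : ∀ i, (blockOf w (cutSeq w c) i).Sublist w := fun i =>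
    (List.take_sublist _ _).trans (List.drop_sublist _ _)
  -- The partial direct sums are the prefixes of `w` ending at the cut points.
  have hfold : ∀ i ≤ c.length, List.foldl oplus (blockOf w (cutSeq w c) 0)
      ((List.range i).map (fun i => sts (blockOf w (cutSeq w c) (i + 1)))) =
        w.take (cutSeq w c)[i + 1]! := by
    intro i
    induction i with
    | zero => intro _; rw [blockOf, cutSeq_zero]; rfl
    | succ i ih =>
      intro hi
      rw [List.range_succ, List.map_append, List.foldl_append, ih (by omega)]
      have hle := cutSeq_le hq (show i + 1 ≤ c.length + 1 by omega)
      have hlt := cutSeq_strict hq (show i + 1 < i + 1 + 1 by omega) (by omega)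
      simp only [List.map_cons, List.map_nil, List.foldl_cons, List.foldl_nil, oplus,
        List.length_take, min_eq_left hle]
      rw [hshift (i + 1) hi, blockOf, ← List.take_add]
      congr 1
      omega
  -- Signs do not change inside a block, so each block has the sign of its first entry.
  have hconst : ∀ i ≤ c.length, ∀ t, (cutSeq w c)[i]! ≤ t → t < (cutSeq w c)[i + 1]! →
      0 < w[(cutSeq w c)[i]!]! * w[t]! := by
    intro i hi t ht
    have hle := cutSeq_le hq (show i + 1 ≤ c.length + 1 by omega)
    induction t, ht using Nat.le_induction with
    | base => intro hlt; exact mul_self_pos.2 (hne _ (by omega))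
    | succ t ht ih =>
      intro hlt
      have hnot : ¬ SignChange w (t + 1) := by
        intro hsc
        obtain ⟨j, hj1, hj2, hj⟩ := (mem_iff_cutSeq w c _).1 ((hmem _).2 hsc)
        rcases lt_trichotomy j (i + 1) with hji | rfl | hji
        · rcases (Nat.lt_succ_iff.1 hji).eq_or_lt with rfl | hji
          · omega
          · have := cutSeq_strict hq hji (by omega)
            omega
        · omega
        · have := cutSeq_strict hq hji (by omega)
          omega
      have hadj : ¬ w[t]! * w[t + 1]! < 0 := fun hc => hnot ⟨by omega, by omega, by simpa using hc⟩
      have hpos : 0 < w[t]! * w[t + 1]! :=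
        lt_of_le_of_ne (not_lt.1 hadj) (mul_ne_zero (hne _ (by omega)) (hne _ (by omega))).symm
      have ih' := ih (by omega)
      rcases mul_pos_iff.1 ih' with ⟨a, b⟩ | ⟨a, b⟩ <;>
        rcases mul_pos_iff.1 hpos with ⟨d, e⟩ | ⟨d, e⟩
      all_goals first | omega | nlinarith
  refine ⟨c, List.isChain_iff_pairwise.2 hq, ?_, ?_, ?_, ?_, ?_⟩
  · rw [hfold _ le_rfl, cutSeq_last, List.take_length]
  · rw [← hblock0]
    exact h.sts_of_sublist (hsub 0)
  · exact fun i _ _ => h.sts_of_sublist (hsub i)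
  · intro j hj
    have hle := cutSeq_le hq (show j + 1 ≤ c.length + 1 by omega)
    have hlt := cutSeq_strict hq (show j < j + 1 by omega) (by omega)
    rcases lt_or_gt_of_ne (hne (cutSeq w c)[j]! (by omega)) with hs | hs
    · right
      intro x hx
      obtain ⟨t, h1, h2, rfl⟩ := (mem_blockOf hle).1 hx
      exact neg_of_mul_pos_right (hconst j hj t h1 h2) hs.le
    · left
      intro x hx
      obtain ⟨t, h1, h2, rfl⟩ := (mem_blockOf hle).1 hx
      exact pos_of_mul_pos_right (hconst j hj t h1 h2) hs.le
  · intro i h1 h2 x hx y hy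
    obtain ⟨j, rfl⟩ : ∃ j, i = j + 1 := ⟨i - 1, by omega⟩
    have hle := cutSeq_le hq (show j + 1 + 1 ≤ c.length + 1 by omega)
    have hlt1 := cutSeq_strict hq (show j < j + 1 by omega) (by omega)
    have hlt2 := cutSeq_strict hq (show j + 1 < j + 1 + 1 by omega) (by omega)
    obtain ⟨s, s1, s2, rfl⟩ := (mem_blockOf (i := j) (by omega)).1 hx
    obtain ⟨t, t1, t2, rfl⟩ := (mem_blockOf hle).1 hy
    have hsc := (hmem _).1 ((mem_iff_cutSeq w c _).2 ⟨j + 1, h1, h2, rfl⟩)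
    have e1 := hconst j (by omega) s s1 s2
    have e2 := hconst j (by omega) ((cutSeq w c)[j + 1]! - 1) (by omega) (by omega)
    have e3 := hconst (j + 1) h2 t t1 t2
    have e4 := hsc.2.2
    rcases mul_pos_iff.1 e1 with ⟨a, b⟩ | ⟨a, b⟩ <;> rcases mul_pos_iff.1 e2 with ⟨d, e⟩ | ⟨d, e⟩ <;>
      rcases mul_pos_iff.1 e3 with ⟨f, g⟩ | ⟨f, g⟩ <;> rcases mul_neg_iff.1 e4 with ⟨k, l⟩ | ⟨k, l⟩
    all_goals first | omega | exact mul_neg_of_pos_of_neg b g | exact mul_neg_of_neg_of_pos b g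

/-- `w ∈ B_n` is separable iff it admits a block direct-sum
decomposition along cut points `0 = p₀ < p₁ < ⋯ < p_k < p_{k+1} = n` with separable
blocks, each block of constant sign, consecutive blocks of opposite signs; moreover
for separable `w` the sequence of cut points is unique. -/
theorem sep_signed_iff_unique_block_decomp (n : ℕ) (hn : 1 ≤ n) (w : List ℤ)
    (hw : w.length = n) (hperm : IsSignedPerm w) :
    (IsSepB w ↔ ∃ cuts : List ℕ, GoodDecomp w cuts) ∧
    (IsSepB w → ∀ c₁ c₂ : List ℕ, GoodDecomp w c₁ → GoodDecomp w c₂ → c₁ = c₂) := by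
  exact ⟨⟨fun h => h.exists_goodDecomp (by omega), fun ⟨_, hc⟩ => hc.isSepB hperm⟩,
    fun _ _ _ h₁ h₂ => h₁.unique h₂⟩

end

end SepPaperFormal
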